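/- Let A be a k-algebra with an exhaustive ℕ-indexed filtration Λ such that the associated graded algebra gr_Λ A has the property that every graded subalgebra is finitely generated and noetherian. Then every k-subalgebra of A is finitely generated and noetherian. -/

import Mathlib

namespace SuperNoeth

variable {k A B : Type*} [Field k] [Ring A] [Algebra k A] [Ring B] [Algebra k B]

/-- The subspace of `B` of elements whose components are symbols of elements of `M`. -/
def gr {Λ : ℕ → Submodule k A} (ℬ : ℕ → Submodule k B) [GradedAlgebra ℬ]
    (σ : ∀ i, Λ i →ₗ[k] B) (M : Submodule k A) : Submodule k B where
  carrier := {x | ∀ i, (DirectSum.decompose ℬ x i : B) ∈ (M.comap (Λ i).subtype).map (σ i)}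
  add_mem' := by
    intro x y hx hy i
    have := Submodule.add_mem _ (hx i) (hy i)
    simpa [DirectSum.decompose_add] using this
  zero_mem' := by
    intro i
    simp
  smul_mem' := by
    intro c x hx i
    have := Submodule.smul_mem _ c (hx i)
    rw [DirectSum.decompose_smul]
    exact this

variable {Λ : ℕ → Submodule k A} (ℬ : ℕ → Submodule k B) [GradedAlgebra ℬ]
    (σ : ∀ i, Λ i →ₗ[k] B)

theorem mem_gr {M : Submodule k A} {x : B} :
    x ∈ gr ℬ σ M ↔ ∀ i, ∃ a : Λ i, (a : A) ∈ M ∧ σ i a = (DirectSum.decompose ℬ x i : B) :=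
  Iff.rfl

theorem gr_mono {M N : Submodule k A} (h : M ≤ N) : gr ℬ σ M ≤ gr ℬ σ N := by
  intro x hx i
  obtain ⟨a, ha, h1⟩ := hx i
  exact ⟨a, h ha, h1⟩

theorem symbol_mem (hσ : ∀ i a, σ i a ∈ ℬ i) {M : Submodule k A} {i : ℕ} (a : Λ i)
    (ha : (a : A) ∈ M) : σ i a ∈ gr ℬ σ M := by
  rw [mem_gr]
  intro j
  by_cases h : i = j
  · subst h
    exact ⟨a, ha, (DirectSum.decompose_of_mem_same ℬ (hσ i a)).symm⟩
  · exact ⟨0, by simp, by rw [DirectSum.decompose_of_mem_ne ℬ (hσ i a) h]; simp⟩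

theorem comp_mem {M : Submodule k A} (hσ : ∀ i a, σ i a ∈ ℬ i) {x : B} (hx : x ∈ gr ℬ σ M)
    (i : ℕ) : (DirectSum.decompose ℬ x i : B) ∈ gr ℬ σ M := by
  obtain ⟨a, ha, h⟩ := (mem_gr ℬ σ).1 hx i
  rw [← h]
  exact symbol_mem ℬ σ hσ a ha

theorem mul_mem_gr (hσ : ∀ i a, σ i a ∈ ℬ i)
    (hmul : ∀ i j, ∀ a ∈ Λ i, ∀ b ∈ Λ j, a * b ∈ Λ (i + j))
    (hm : ∀ (i j : ℕ) (a : Λ i) (b : Λ j),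
      σ (i + j) ⟨(a : A) * (b : A), hmul i j a a.2 b b.2⟩ = σ i a * σ j b)
    {M N P : Submodule k A} (h : ∀ m ∈ M, ∀ n ∈ N, m * n ∈ P) {x y : B}
    (hx : x ∈ gr ℬ σ M) (hy : y ∈ gr ℬ σ N) : x * y ∈ gr ℬ σ P := by
  classical
  rw [← DirectSum.sum_support_decompose ℬ x, ← DirectSum.sum_support_decompose ℬ y,
    Finset.sum_mul_sum]
  refine Submodule.sum_mem _ fun i _ => Submodule.sum_mem _ fun j _ => ?_
  obtain ⟨a, ha, h1⟩ := (mem_gr ℬ σ).1 hx i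
  obtain ⟨b, hb, h2⟩ := (mem_gr ℬ σ).1 hy j
  rw [← h1, ← h2, ← hm]
  exact symbol_mem ℬ σ hσ _ (h _ ha _ hb)

theorem le_of_gr_le (hmono : Monotone Λ) (hexh : ⨆ i, Λ i = ⊤) (hσ : ∀ i a, σ i a ∈ ℬ i)
    (hk : ∀ i a, σ i a = 0 → (a : A) ∈ ⨆ j, ⨆ _ : j < i, Λ j)
    {M N : Submodule k A} (hMN : M ≤ N) (h : gr ℬ σ N ≤ gr ℬ σ M) : N ≤ M := by
  have key : ∀ i, ∀ x ∈ N, x ∈ Λ i → x ∈ M := by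
    intro i
    induction i with
    | zero =>
      intro x hx hi
      obtain ⟨m, hm, h1⟩ := (mem_gr ℬ σ).1 (h (symbol_mem ℬ σ hσ ⟨x, hi⟩ hx)) 0
      rw [DirectSum.decompose_of_mem_same ℬ (hσ _ _)] at h1
      have h2 := hk 0 (⟨x, hi⟩ - m) (by rw [map_sub, h1, sub_self])
      have h3 : x - (m : A) = 0 := by simpa using h2
      rw [sub_eq_zero.1 h3]
      exact hm
    | succ i ih =>
      intro x hx hi
      obtain ⟨m, hm, h1⟩ := (mem_gr ℬ σ).1 (h (symbol_mem ℬ σ hσ ⟨x, hi⟩ hx)) (i + 1)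
      rw [DirectSum.decompose_of_mem_same ℬ (hσ _ _)] at h1
      have h2 := hk (i + 1) (⟨x, hi⟩ - m) (by rw [map_sub, h1, sub_self])
      have h3 : x - (m : A) ∈ Λ i :=
        (iSup₂_le fun j hj => hmono (Nat.lt_succ_iff.1 hj) :
          (⨆ j, ⨆ _ : j < i + 1, Λ j) ≤ Λ i) h2
      have h4 := M.add_mem (ih _ (N.sub_mem hx (hMN hm)) h3) hm
      simpa using h4
  intro x hx
  have hx' : x ∈ ⨆ i, Λ i := by rw [hexh]; trivial
  obtain ⟨i, hi⟩ := (Submodule.mem_iSup_of_directed _ hmono.directed_le).1 hx'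
  exact key i x hx hi

theorem main (hmono : Monotone Λ) (hexh : ⨆ i, Λ i = ⊤) (hone : (1 : A) ∈ Λ 0)
    (hσ : ∀ i a, σ i a ∈ ℬ i)
    (hk : ∀ i a, σ i a = 0 → (a : A) ∈ ⨆ j, ⨆ _ : j < i, Λ j)
    (h1 : σ 0 ⟨1, hone⟩ = 1)
    (hmul : ∀ i j, ∀ a ∈ Λ i, ∀ b ∈ Λ j, a * b ∈ Λ (i + j))
    (hm : ∀ (i j : ℕ) (a : Λ i) (b : Λ j),
      σ (i + j) ⟨(a : A) * (b : A), hmul i j a a.2 b b.2⟩ = σ i a * σ j b)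
    (hsup : ∀ S : Subalgebra k B,
      (∀ x ∈ S, ∀ i, (DirectSum.decompose ℬ x i : B) ∈ S) → S.FG ∧ IsNoetherianRing S)
    (R : Subalgebra k A) : R.FG ∧ IsNoetherianRing R := by
  classical
  have hS1 : ∀ R : Subalgebra k A, (1 : B) ∈ gr ℬ σ R.toSubmodule := fun R => by
    rw [← h1]; exact symbol_mem ℬ σ hσ _ R.one_mem
  let S : Subalgebra k A → Subalgebra k B := fun R =>
    Submodule.toSubalgebra (gr ℬ σ R.toSubmodule) (hS1 R)
      (fun x y hx hy => mul_mem_gr ℬ σ hσ hmul hm (fun m hm n hn => R.mul_mem hm hn) hx hy)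
  have hS : ∀ R x, x ∈ S R ↔ x ∈ gr ℬ σ R.toSubmodule := fun R x => Iff.rfl
  obtain ⟨hfg, hN⟩ := hsup (S R) (fun x hx i => comp_mem ℬ σ hσ hx i)
  constructor
  · obtain ⟨s, hs⟩ := hfg
    have hsR : ∀ x ∈ s, x ∈ gr ℬ σ R.toSubmodule := fun x hx => by
      rw [← hS, ← hs]; exact Algebra.subset_adjoin hx
    have hch : ∀ (x : B) (i : ℕ), ∃ a : Λ i, x ∈ s →
        ((a : A) ∈ R ∧ σ i a = (DirectSum.decompose ℬ x i : B)) := fun x i => by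
      by_cases hx : x ∈ s
      · obtain ⟨a, ha⟩ := (mem_gr ℬ σ).1 (hsR x hx) i
        exact ⟨a, fun _ => ha⟩
      · exact ⟨0, fun h => absurd h hx⟩
    choose a ha using hch
    let T : Finset A := s.biUnion fun x =>
      (DirectSum.decompose ℬ x).support.image fun i => (a x i : A)
    have hTR : Algebra.adjoin k (T : Set A) ≤ R := by
      refine Algebra.adjoin_le ?_
      intro y hy
      simp only [T, Finset.coe_biUnion, Set.mem_iUnion, Finset.coe_image, Set.mem_image] at hy
      obtain ⟨x, hx, i, -, rfl⟩ := hy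
      exact (ha x i hx).1
    have hle : S R ≤ S (Algebra.adjoin k (T : Set A)) := by
      rw [← hs]
      refine Algebra.adjoin_le ?_
      intro x hx
      refine (mem_gr ℬ σ).2 fun i => ?_
      by_cases hi : i ∈ (DirectSum.decompose ℬ x).support
      · refine ⟨a x i, Algebra.subset_adjoin ?_, (ha x i hx).2⟩
        exact Finset.mem_coe.2 (Finset.mem_biUnion.2 ⟨x, hx, Finset.mem_image.2 ⟨i, hi, rfl⟩⟩)
      · refine ⟨0, by simp, ?_⟩
        rw [DFinsupp.notMem_support_iff.1 hi]
        simp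
    have := le_of_gr_le ℬ σ hmono hexh hσ hk (M := (Algebra.adjoin k (T : Set A)).toSubmodule)
      (N := R.toSubmodule) hTR hle
    exact ⟨T, le_antisymm hTR this⟩
  · let im : Ideal R → Submodule k A := fun I =>
      (I.restrictScalars k).map R.val.toLinearMap
    have him : ∀ I (r : R), (r : A) ∈ im I ↔ r ∈ I := by
      intro I r
      constructor
      · rintro ⟨r', hr', h⟩
        have : r' = r := Subtype.ext h
        exact this ▸ hr'
      · intro h
        exact ⟨r, h, rfl⟩
    have himR : ∀ I, im I ≤ R.toSubmodule := by
      rintro I _ ⟨r, -, rfl⟩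
      exact r.2
    let f : Ideal R → Ideal (S R) := fun I =>
      { carrier := {x | (x : B) ∈ gr ℬ σ (im I)}
        add_mem' := fun hx hy => (gr ℬ σ (im I)).add_mem hx hy
        zero_mem' := (gr ℬ σ (im I)).zero_mem
        smul_mem' := fun c x hx => by
          refine mul_mem_gr ℬ σ hσ hmul hm (M := R.toSubmodule) (N := im I) ?_ c.2 hx
          rintro m hm _ ⟨r, hr, rfl⟩
          exact (him I (⟨m, hm⟩ * r)).2 (I.mul_mem_left _ hr) }
    have himm : ∀ I J, I ≤ J → im I ≤ im J := fun I J h => Submodule.map_mono h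
    have hf : StrictMono f := by
      intro I J hIJ
      refine lt_of_le_not_ge (fun x hx => gr_mono ℬ σ (himm I J hIJ.le) hx) fun h => ?_
      refine not_le_of_gt hIJ fun r hr => ?_
      refine (him I r).1
        (le_of_gr_le ℬ σ hmono hexh hσ hk (himm I J hIJ.le) ?_ ((him J r).2 hr))
      intro x hx
      exact h (x := ⟨x, gr_mono ℬ σ (himR J) hx⟩) hx
    have hw : WellFoundedGT (Ideal (S R)) := inferInstance
    have : WellFoundedGT (Ideal R) := hf.wellFoundedGT
    exact isNoetherian_iff'.2 this

end SuperNoeth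


/-- Let `A` be a `k`-algebra with an exhaustive ℕ-indexed filtration `Λ` whose
associated graded algebra (presented here as an ℕ-graded `k`-algebra `B` with grading `ℬ`,
together with the canonical degreewise linear isomorphisms `e`, compatible with multiplication
and the unit) has the property that every graded subalgebra is finitely generated and
noetherian.  Then every `k`-subalgebra of `A` is finitely generated and noetherian. -/
theorem supernoetherian_of_gr_graded_supernoetherian
    (k A B : Type*) [Field k] [Ring A] [Algebra k A] [Ring B] [Algebra k B]
    (Λ : ℕ → Submodule k A) (hmono : Monotone Λ) (hexh : ⨆ i, Λ i = ⊤)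
    (hone : (1 : A) ∈ Λ 0) (hmul : ∀ i j, ∀ a ∈ Λ i, ∀ b ∈ Λ j, a * b ∈ Λ (i + j))
    (ℬ : ℕ → Submodule k B) [GradedAlgebra ℬ]
    -- `B` is the associated graded algebra of the filtration `Λ`:
    (e : ∀ i : ℕ,
      ((Λ i) ⧸ (Submodule.comap (Λ i).subtype (⨆ j, ⨆ _ : j < i, Λ j))) ≃ₗ[k] ℬ i)
    (he1 : (e 0 (Submodule.Quotient.mk ⟨1, hone⟩) : B) = 1)
    (hemul : ∀ (i j : ℕ) (a : Λ i) (b : Λ j),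
      (e (i + j) (Submodule.Quotient.mk ⟨(a : A) * (b : A), hmul i j a a.2 b b.2⟩) : B) =
        (e i (Submodule.Quotient.mk a) : B) * (e j (Submodule.Quotient.mk b) : B))
    -- every graded subalgebra of `B = gr A` is finitely generated and noetherian:
    (hsup : ∀ S : Subalgebra k B,
      (∀ x ∈ S, ∀ i, (DirectSum.decompose ℬ x i : B) ∈ S) → S.FG ∧ IsNoetherianRing S) :
    ∀ R : Subalgebra k A, R.FG ∧ IsNoetherianRing R := by
  intro R
  refine SuperNoeth.main ℬ
    (fun i => (ℬ i).subtype ∘ₗ (e i).toLinearMap ∘ₗ Submodule.mkQ _)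
    hmono hexh hone (fun i a => (e i _).2) ?_ he1 hmul hemul hsup R
  intro i a h
  have h2 : e i (Submodule.Quotient.mk a) = 0 := Subtype.ext h
  rw [LinearEquiv.map_eq_zero_iff, Submodule.Quotient.mk_eq_zero] at h2
  exact h2
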